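/- The backward and forward implicit action functions are inverse to each other in the sense that for all x₀, x ∈ M, u₀, u ∈ ℝ and t > 0: h_{x₀,u₀}(x,t) = u if and only if h^{x,u}(x₀,t) = u₀. (Proposition 2.4, Equivalence.) -/

import Mathlib

open Filter MeasureTheory Set
open scoped RealInnerProductSpace Topology NNReal

noncomputable section

/-- The model space: the closed manifold `M` is realized as a compact subset of a
Euclidean space (Whitney embedding), and the fibers of `T*M` as Euclidean vectors. -/
abbrev Euc (n : ℕ) := EuclideanSpace ℝ (Fin n)

variable {n : ℕ}

/-- `∂H/∂p`, the gradient of `H` in the momentum variable. -/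
def pGrad (H : Euc n → Euc n → ℝ → ℝ) (x p : Euc n) (u : ℝ) : Euc n :=
  gradient (fun q => H x q u) p

/-- `∂H/∂x`, the gradient of `H` in the position variable. -/
def xGrad (H : Euc n → Euc n → ℝ → ℝ) (x p : Euc n) (u : ℝ) : Euc n :=
  gradient (fun y => H y p u) x

/-- `∂H/∂u`, the derivative of `H` in the value variable. -/
def uDeriv (H : Euc n → Euc n → ℝ → ℝ) (x p : Euc n) (u : ℝ) : ℝ :=
  deriv (fun w => H x p w) u

/-- The contact Hamiltonian vector field
`ẋ = ∂H/∂p, ṗ = −∂H/∂x − (∂H/∂u)p, u̇ = (∂H/∂p)·p − H`. -/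
def contactVF (H : Euc n → Euc n → ℝ → ℝ) :
    Euc n × Euc n × ℝ → Euc n × Euc n × ℝ := fun z =>
  (pGrad H z.1 z.2.1 z.2.2,
   -xGrad H z.1 z.2.1 z.2.2 - uDeriv H z.1 z.2.1 z.2.2 • z.2.1,
   ⟪pGrad H z.1 z.2.1 z.2.2, z.2.1⟫ - H z.1 z.2.1 z.2.2)

/-- (H1) Positive definiteness of `∂²H/∂p²`. -/
def PosDefInP (H : Euc n → Euc n → ℝ → ℝ) : Prop :=
  ∀ x u p v, v ≠ 0 → 0 < ⟪(fderiv ℝ (fun q => pGrad H x q u) p) v, v⟫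

/-- (H2) Superlinearity of `H` in `p`. -/
def Superlinear (H : Euc n → Euc n → ℝ → ℝ) : Prop :=
  ∀ x u, Tendsto (fun p : Euc n => H x p u / ‖p‖) (cocompact (Euc n)) atTop

/-- (H3) `|∂H/∂u| ≤ λ`. -/
def LipInU (H : Euc n → Euc n → ℝ → ℝ) (lam : ℝ) : Prop :=
  ∀ x p u, |uDeriv H x p u| ≤ lam

/-- `H` is a `C³` function. -/
def C3 (H : Euc n → Euc n → ℝ → ℝ) : Prop :=
  ContDiff ℝ 3 (fun z : Euc n × Euc n × ℝ => H z.1 z.2.1 z.2.2)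

/-- `L` is the Legendre transform of `H`: `L(x,v,u) = sup_p {⟨p,v⟩ − H(x,p,u)}`. -/
def IsLegendre (H L : Euc n → Euc n → ℝ → ℝ) : Prop :=
  ∀ x v u, L x v u = sSup {r | ∃ p : Euc n, r = ⟪p, v⟫ - H x p u}

/-- `Φ` is the (complete) flow of the contact Hamiltonian vector field `X_H`. -/
def IsContactFlow (H : Euc n → Euc n → ℝ → ℝ)
    (Φ : ℝ → Euc n × Euc n × ℝ → Euc n × Euc n × ℝ) : Prop :=
  (∀ z, Φ 0 z = z) ∧ ∀ z t, HasDerivAt (fun s => Φ s z) (contactVF H (Φ t z)) t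

/-- Absolutely continuous curve on `[a,b]`: an indefinite integral of an integrable map. -/
def AbsCont (γ : ℝ → Euc n) (a b : ℝ) : Prop :=
  ∃ g : ℝ → Euc n, IntervalIntegrable g volume a b ∧
    ∀ s ∈ Icc a b, γ s = γ a + ∫ τ in a..s, g τ

/-- The superdifferential `D⁺φ(x)` of `φ` at `x` (relative to `M`):
`limsup_{y→x} (φ(y) − φ(x) − ⟨p, y−x⟩)/|y−x| ≤ 0`. -/
def SuperDiff (M : Set (Euc n)) (φ : Euc n → ℝ) (x : Euc n) : Set (Euc n) :=
  {p | ∀ ε > (0:ℝ), ∀ᶠ y in 𝓝[M \ {x}] x,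
      φ y - φ x - ⟪p, y - x⟫ ≤ ε * ‖y - x‖}

/-- `φ` is a viscosity subsolution of `H(x,∂ₓu,u) = c` on `U`:
`H(x,p,φ(x)) ≤ c` for every `x ∈ U` and `p ∈ D⁺φ(x)`. -/
def IsVSub (M : Set (Euc n)) (H : Euc n → Euc n → ℝ → ℝ) (c : ℝ)
    (φ : Euc n → ℝ) (U : Set (Euc n)) : Prop :=
  ∀ x ∈ U, ∀ p ∈ SuperDiff M φ x, H x p (φ x) ≤ c

/-- `φ` is a strict viscosity subsolution of `H(x,∂ₓu,u) = 0` on `M`: a viscosity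
subsolution which is strict at every point of `M`. -/
def IsStrictVSub (M : Set (Euc n)) (H : Euc n → Euc n → ℝ → ℝ)
    (φ : Euc n → ℝ) : Prop :=
  IsVSub M H 0 φ M ∧
  ∀ x₀ ∈ M, ∃ V : Set (Euc n), IsOpen V ∧ x₀ ∈ V ∧
    ∃ c < (0:ℝ), IsVSub M H c φ (V ∩ M)

/-- The backward solution semigroup `T_t⁻`: the continuous function satisfying
`T_t⁻φ(x) = inf_{γ(t)=x} {φ(γ(0)) + ∫₀ᵗ L(γ,γ̇,T_τ⁻φ(γ(τ))) dτ}` over absolutely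
continuous curves in `M`. -/
def IsBackwardSemigroup (M : Set (Euc n)) (L : Euc n → Euc n → ℝ → ℝ)
    (φ : Euc n → ℝ) (Tm : ℝ → Euc n → ℝ) : Prop :=
  (∀ x ∈ M, Tm 0 x = φ x) ∧
  ContinuousOn (fun q : ℝ × Euc n => Tm q.1 q.2) (Ici 0 ×ˢ M) ∧
  ∀ t > (0:ℝ), ∀ x ∈ M,
    Tm t x = sInf {r | ∃ γ : ℝ → Euc n, AbsCont γ 0 t ∧
      (∀ τ ∈ Icc (0:ℝ) t, γ τ ∈ M) ∧ γ t = x ∧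
      r = φ (γ 0) + ∫ τ in (0:ℝ)..t, L (γ τ) (deriv γ τ) (Tm τ (γ τ))}

/-- The forward solution semigroup `T_t⁺`: the continuous function satisfying
`T_t⁺φ(x) = sup_{γ(0)=x} {φ(γ(t)) − ∫₀ᵗ L(γ,γ̇,T_{t−τ}⁺φ(γ(τ))) dτ}` over absolutely
continuous curves in `M`. -/
def IsForwardSemigroup (M : Set (Euc n)) (L : Euc n → Euc n → ℝ → ℝ)
    (φ : Euc n → ℝ) (Tp : ℝ → Euc n → ℝ) : Prop :=
  (∀ x ∈ M, Tp 0 x = φ x) ∧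
  ContinuousOn (fun q : ℝ × Euc n => Tp q.1 q.2) (Ici 0 ×ˢ M) ∧
  ∀ t > (0:ℝ), ∀ x ∈ M,
    Tp t x = sSup {r | ∃ γ : ℝ → Euc n, AbsCont γ 0 t ∧
      (∀ τ ∈ Icc (0:ℝ) t, γ τ ∈ M) ∧ γ 0 = x ∧
      r = φ (γ t) - ∫ τ in (0:ℝ)..t, L (γ τ) (deriv γ τ) (Tp (t - τ) (γ τ))}

/-- The backward implicit action function `h_{x₀,u₀}(x,t)`, characterized by the
implicit variational principle over Lipschitz curves. -/
def IsBackwardAction (M : Set (Euc n)) (L : Euc n → Euc n → ℝ → ℝ)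
    (hb : Euc n → ℝ → Euc n → ℝ → ℝ) : Prop :=
  ContinuousOn (fun q : Euc n × ℝ × Euc n × ℝ => hb q.1 q.2.1 q.2.2.1 q.2.2.2)
    (M ×ˢ (univ : Set ℝ) ×ˢ M ×ˢ Ioi 0) ∧
  ∀ x₀ ∈ M, ∀ u₀ : ℝ, ∀ x ∈ M, ∀ t > (0:ℝ),
    hb x₀ u₀ x t = u₀ + sInf {a | ∃ γ : ℝ → Euc n,
      (∃ K : ℝ≥0, LipschitzOnWith K γ (Icc 0 t)) ∧
      (∀ τ ∈ Icc (0:ℝ) t, γ τ ∈ M) ∧ γ 0 = x₀ ∧ γ t = x ∧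
      a = ∫ τ in (0:ℝ)..t, L (γ τ) (deriv γ τ) (hb x₀ u₀ (γ τ) τ)}

/-- The forward implicit action function `h^{x₀,u₀}(x,t)`, characterized by the
implicit variational principle over Lipschitz curves. -/
def IsForwardAction (M : Set (Euc n)) (L : Euc n → Euc n → ℝ → ℝ)
    (hf : Euc n → ℝ → Euc n → ℝ → ℝ) : Prop :=
  ContinuousOn (fun q : Euc n × ℝ × Euc n × ℝ => hf q.1 q.2.1 q.2.2.1 q.2.2.2)
    (M ×ˢ (univ : Set ℝ) ×ˢ M ×ˢ Ioi 0) ∧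
  ∀ x₀ ∈ M, ∀ u₀ : ℝ, ∀ x ∈ M, ∀ t > (0:ℝ),
    hf x₀ u₀ x t = u₀ - sInf {a | ∃ γ : ℝ → Euc n,
      (∃ K : ℝ≥0, LipschitzOnWith K γ (Icc 0 t)) ∧
      (∀ τ ∈ Icc (0:ℝ) t, γ τ ∈ M) ∧ γ 0 = x ∧ γ t = x₀ ∧
      a = ∫ τ in (0:ℝ)..t, L (γ τ) (deriv γ τ) (hf x₀ u₀ (γ τ) (t - τ))}

/-- The epigraph `Γ_φ = {(x,p,u) ∈ T*M × ℝ : u ≥ φ(x)}`. -/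
def Epi (M : Set (Euc n)) (φ : Euc n → ℝ) : Set (Euc n × Euc n × ℝ) :=
  {z | z.1 ∈ M ∧ φ z.1 ≤ z.2.2}

/-- The interior `Γ̊_φ = {(x,p,u) ∈ T*M × ℝ : u > φ(x)}` of the epigraph. -/
def EpiInt (M : Set (Euc n)) (φ : Euc n → ℝ) : Set (Euc n × Euc n × ℝ) :=
  {z | z.1 ∈ M ∧ φ z.1 < z.2.2}

/-- Piecewise `C¹` curve on `[a,b]`. -/
def PiecewiseC1On (γ : ℝ → Euc n) (a b : ℝ) : Prop :=
  ContinuousOn γ (Icc a b) ∧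
  ∃ (k : ℕ) (τ : ℕ → ℝ), τ 0 = a ∧ τ k = b ∧ (∀ i < k, τ i < τ (i + 1)) ∧
    ∀ i < k, ContDiffOn ℝ 1 γ (Icc (τ i) (τ (i + 1)))


/-- The properties of a Lagrangian used by the implicit variational principle over a set `M`. They
are invariant under time reversal. -/
structure TameLagrangian (M : Set (Euc n)) (L : Euc n → Euc n → ℝ → ℝ) (lam : ℝ) : Prop where
  lam_pos : 0 < lam
  measurable : Measurable fun z : Euc n × Euc n × ℝ => L z.1 z.2.1 z.2.2
  abs_sub_le : ∀ x v u w, |L x v u - L x v w| ≤ lam * |u - w|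
  lower : ∃ C, ∀ x ∈ M, ∀ v, -C ≤ L x v 0
  upper : ∀ K, ∃ C, ∀ x ∈ M, ∀ v, ‖v‖ ≤ K → L x v 0 ≤ C

section Legendre

variable {H L : Euc n → Euc n → ℝ → ℝ} {lam : ℝ} {M : Set (Euc n)}

lemma C3.contDiff_momentum (hC3 : C3 H) (x : Euc n) (u : ℝ) :
    ContDiff ℝ 3 fun q => H x q u :=
  ContDiff.comp (g := fun z : Euc n × Euc n × ℝ => H z.1 z.2.1 z.2.2)
    (f := fun q : Euc n => (x, q, u)) hC3 (by fun_prop)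

lemma C3.continuous (hC3 : C3 H) :
    Continuous fun z : Euc n × Euc n × ℝ => H z.1 z.2.1 z.2.2 :=
  ContDiff.continuous hC3

lemma LipInU.abs_sub_le (hH3 : LipInU H lam) (hC3 : C3 H) (x p : Euc n) (u w : ℝ) :
    |H x p u - H x p w| ≤ lam * |u - w| := by
  have hd : ContDiff ℝ 3 fun w => H x p w :=
    ContDiff.comp (g := fun z : Euc n × Euc n × ℝ => H z.1 z.2.1 z.2.2)
      (f := fun w : ℝ => (x, p, w)) hC3 (by fun_prop)
  exact Convex.norm_image_sub_le_of_norm_deriv_le (s := univ) (f := fun w => H x p w)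
    (fun y _ => (hd.differentiable (by norm_num)).differentiableAt)
    (fun y _ => hH3 x p y) convex_univ (mem_univ w) (mem_univ u)

lemma PosDefInP.convexOn_ray (hH1 : PosDefInP H) (hC3 : C3 H) (x p : Euc n) (u : ℝ) :
    ConvexOn ℝ univ fun s : ℝ => H x (s • p) u := by
  have hsm := hC3.contDiff_momentum x u
  have hgrad : ContDiff ℝ 2 fun q => pGrad H x q u :=
    (InnerProductSpace.toDual ℝ (Euc n)).symm.contDiff.comp (hsm.fderiv_right (by norm_num))
  have hline : ∀ s : ℝ, HasDerivAt (fun s : ℝ => s • p) p s := fun s => by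
    simpa using (hasDerivAt_id s).smul_const p
  have h1 : ∀ s : ℝ, HasDerivAt (fun s : ℝ => H x (s • p) u) ⟪pGrad H x (s • p) u, p⟫ s := by
    intro s
    have hg : HasGradientAt (fun q => H x q u) (pGrad H x (s • p) u) (s • p) :=
      ((hsm.differentiable (by norm_num)) (s • p)).hasGradientAt
    simpa using! hg.hasFDerivAt.comp_hasDerivAt s (hline s)
  have h2 : ∀ s : ℝ, HasDerivAt (fun s : ℝ => ⟪pGrad H x (s • p) u, p⟫)
      ⟪fderiv ℝ (fun q => pGrad H x q u) (s • p) p, p⟫ s := by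
    intro s
    have hg := ((hgrad.differentiable (by norm_num)) (s • p)).hasFDerivAt
    simpa using (hg.comp_hasDerivAt s (hline s)).inner ℝ (hasDerivAt_const s p)
  refine Monotone.convexOn_univ_of_deriv (fun s => (h1 s).differentiableAt) ?_
  rw [funext fun s => (h1 s).deriv]
  refine monotone_of_deriv_nonneg (fun s => (h2 s).differentiableAt) fun s => ?_
  rw [(h2 s).deriv]
  rcases eq_or_ne p 0 with rfl | hp
  · simp
  · exact (hH1 x u _ p hp).le

lemma eventually_coercive (hC3 : C3 H) (hH1 : PosDefInP H) (hH2 : Superlinear H) (x₀ : Euc n)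
    (u K : ℝ) :
    ∃ R > 0, ∀ᶠ x in 𝓝 x₀, ∀ p, R ≤ ‖p‖ → K * ‖p‖ ≤ H x p u - H x 0 u := by
  have hev := (hH2 x₀ u).eventually_ge_atTop (K + 1 + |H x₀ 0 u|)
  rw [← Metric.cobounded_eq_cocompact, (hasBasis_cobounded_norm).eventually_iff] at hev
  obtain ⟨R₀, -, hR₀⟩ := hev
  set R := max R₀ 1 with hR
  have hR1 : 1 ≤ R := le_max_right _ _
  refine ⟨R, by linarith, ?_⟩
  have hcont : Continuous fun z : Euc n × Euc n => H z.1 z.2 u - H z.1 0 u :=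
    (hC3.continuous.comp (f := fun z : Euc n × Euc n => (z.1, z.2, u)) (by fun_prop)).sub
      (hC3.continuous.comp (f := fun z : Euc n × Euc n => (z.1, (0 : Euc n), u)) (by fun_prop))
  have hsphere : ∀ᶠ x in 𝓝 x₀, ∀ p ∈ Metric.sphere (0 : Euc n) R,
      K * R < H x p u - H x 0 u := by
    refine (isCompact_sphere _ _).eventually_forall_of_forall_eventually fun p hp => ?_
    refine hcont.continuousAt.eventually_const_lt ?_
    have hp' : ‖p‖ = R := by simpa using hp
    have h1 : K + 1 + |H x₀ 0 u| ≤ H x₀ p u / ‖p‖ :=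
      hR₀ (show R₀ ≤ ‖p‖ by rw [hp']; exact le_max_left R₀ 1)
    rw [le_div_iff₀ (by rw [hp']; linarith), hp'] at h1
    have h2 := le_abs_self (H x₀ 0 u)
    have h3 := abs_nonneg (H x₀ 0 u)
    simp only
    nlinarith
  filter_upwards [hsphere] with x hx p hp
  have hp0 : 0 < ‖p‖ := by linarith
  have hs : R / ‖p‖ ≤ 1 := (div_le_one hp0).2 hp
  have hs0 : 0 < R / ‖p‖ := by positivity
  have hconv := (hH1.convexOn_ray hC3 x p u).2 (mem_univ 0) (mem_univ 1)
    (sub_nonneg.2 hs) hs0.le (by ring)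
  simp only [smul_eq_mul, mul_zero, mul_one, zero_add, zero_smul, one_smul] at hconv
  have h1 := hx ((R / ‖p‖) • p) (by
    simp only [mem_sphere_iff_norm, sub_zero, norm_smul, Real.norm_eq_abs]
    rw [abs_of_pos hs0]; field_simp)
  have h2 : R / ‖p‖ * (K * ‖p‖) ≤ R / ‖p‖ * (H x p u - H x 0 u) := by
    have : R / ‖p‖ * (K * ‖p‖) = K * R := by field_simp
    rw [this]; linarith
  exact le_of_mul_le_mul_left h2 hs0

lemma eventually_legendre_le (hC3 : C3 H) (hH1 : PosDefInP H) (hH2 : Superlinear H) (x₀ : Euc n)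
    (u K : ℝ) :
    ∃ C, ∀ᶠ x in 𝓝 x₀, ∀ p v, ‖v‖ ≤ K → ⟪p, v⟫ - H x p u ≤ C := by
  obtain ⟨R, hR, hev⟩ := eventually_coercive hC3 hH1 hH2 x₀ u |K|
  have hcont : Continuous fun z : Euc n × Euc n => H z.1 z.2 u :=
    hC3.continuous.comp (f := fun z : Euc n × Euc n => (z.1, z.2, u)) (by fun_prop)
  obtain ⟨m, hm⟩ := ((isCompact_closedBall (0 : Euc n) R).image
    (hcont.comp (Continuous.prodMk_right x₀))).bddBelow
  have hball : ∀ᶠ x in 𝓝 x₀, ∀ p ∈ Metric.closedBall (0 : Euc n) R, m - 1 < H x p u := by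
    refine (isCompact_closedBall _ _).eventually_forall_of_forall_eventually fun p hp => ?_
    refine hcont.continuousAt.eventually_const_lt ?_
    have : m ≤ H x₀ p u := hm ⟨p, hp, rfl⟩
    simp only
    linarith
  refine ⟨|K| * R - (m - 1), ?_⟩
  filter_upwards [hev, hball] with x h1 h2 p v hv
  have hpv : ⟪p, v⟫ ≤ |K| * ‖p‖ :=
    (real_inner_le_norm p v).trans (by
      rw [mul_comm]; gcongr; exact hv.trans (le_abs_self K))
  rcases le_total R ‖p‖ with hp | hp
  · have h3 := h2 0 (by simp [hR.le])
    have h4 := h1 p hp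
    have h5 : 0 ≤ |K| * R := by positivity
    linarith
  · have h3 := h2 p (by simpa using hp)
    have h4 : |K| * ‖p‖ ≤ |K| * R := by gcongr
    linarith

lemma tameLagrangian_of_isLegendre (hlam : 0 < lam) (hC3 : C3 H) (hH1 : PosDefInP H)
    (hH2 : Superlinear H) (hH3 : LipInU H lam) (hM : IsCompact M) (hLeg : IsLegendre H L) :
    TameLagrangian M L lam := by
  have hL : ∀ x v u, L x v u = ⨆ p, (⟪p, v⟫ - H x p u) := fun x v u => by
    rw [hLeg, iSup]; congr 1; ext r; simp [eq_comm]
  have hbdd : ∀ x v u, BddAbove (range fun p => ⟪p, v⟫ - H x p u) := by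
    intro x v u
    obtain ⟨C, hC⟩ := eventually_legendre_le hC3 hH1 hH2 x u ‖v‖
    exact ⟨C, by rintro _ ⟨p, rfl⟩; exact hC.self_of_nhds p v le_rfl⟩
  have hle : ∀ x v u w, L x v u ≤ L x v w + lam * |u - w| := by
    intro x v u w
    rw [hL, hL]
    refine ciSup_le fun p => ?_
    have h1 := le_ciSup (hbdd x v w) p
    have h2 := (abs_le.1 (hH3.abs_sub_le hC3 x p u w)).1
    linarith
  refine ⟨hlam, ?_, ?_, ?_, ?_⟩
  · simp_rw [hL]
    refine LowerSemicontinuous.measurable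
      (lowerSemicontinuous_ciSup (fun z => hbdd z.1 z.2.1 z.2.2) fun p => ?_)
    refine Continuous.lowerSemicontinuous (Continuous.sub (by fun_prop) ?_)
    exact hC3.continuous.comp
      (f := fun z : Euc n × Euc n × ℝ => (z.1, p, z.2.2)) (by fun_prop)
  · intro x v u w
    have h1 := hle x v u w
    have h2 := hle x v w u
    rw [abs_sub_comm w u] at h2
    exact abs_le.2 ⟨by linarith, by linarith⟩
  · have hcont : Continuous fun x : Euc n => H x 0 0 :=
      hC3.continuous.comp (f := fun x : Euc n => (x, (0 : Euc n), (0 : ℝ))) (by fun_prop)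
    obtain ⟨C, hC⟩ := (hM.image hcont).bddAbove
    refine ⟨C, fun x hx v => ?_⟩
    have h1 := le_ciSup (hbdd x v 0) 0
    have h2 : H x 0 0 ≤ C := hC ⟨x, hx, rfl⟩
    rw [hL]
    simp only [inner_zero_left] at h1
    linarith
  · intro K
    refine hM.induction_on (p := fun S => ∃ C, ∀ x ∈ S, ∀ v, ‖v‖ ≤ K → L x v 0 ≤ C)
      ⟨0, by simp⟩ (fun S T hST ⟨C, hC⟩ => ⟨C, fun x hx => hC x (hST hx)⟩) ?_ ?_
    · rintro S T ⟨C, hC⟩ ⟨D, hD⟩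
      refine ⟨max C D, fun x hx v hv => ?_⟩
      rcases hx with hx | hx
      · exact (hC x hx v hv).trans (le_max_left _ _)
      · exact (hD x hx v hv).trans (le_max_right _ _)
    · intro x₀ _
      obtain ⟨C, hC⟩ := eventually_legendre_le hC3 hH1 hH2 x₀ 0 K
      refine ⟨_, mem_nhdsWithin_of_mem_nhds hC, C, fun x hx v hv => ?_⟩
      rw [hL]
      exact ciSup_le fun p => hx p v hv

end Legendre

section Comparison

variable {a b c lam : ℝ}

lemma le_of_sub_le_integral {f B B' : ℝ → ℝ} (hab : a ≤ b) (hf : ContinuousOn f (Icc a b))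
    (hfi : ∀ r ∈ Icc a b, ∀ s ∈ Icc r b, f s - f r ≤ ∫ τ in r..s, (c + lam * |f τ|))
    (ha : f a ≤ B a) (hB : ∀ r, HasDerivAt B (B' r) r)
    (hB' : ∀ r ∈ Ico a b, c + lam * |B r| < B' r) : f b ≤ B b := by
  refine image_le_of_liminf_slope_right_lt_deriv_boundary' hf
    (f' := fun r => c + lam * |f r|) ?_ ha
    (fun r _ => (hB r).continuousAt.continuousWithinAt) (fun r _ => (hB r).hasDerivWithinAt)
    (fun r hr h => by simpa only [h] using hB' r hr) (right_mem_Icc.2 hab)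
  intro x hx r hr
  have hcont : ContinuousOn (fun r => c + lam * |f r|) (Icc a b) := by fun_prop
  obtain ⟨q, hq, hqr⟩ := exists_between hr
  have hev : ∀ᶠ z in 𝓝[≥] x, c + lam * |f z| < q := by
    rw [← nhdsWithin_Icc_eq_nhdsGE hx.2]
    exact ((hcont x ⟨hx.1, hx.2.le⟩).mono (Icc_subset_Icc_left hx.1)).eventually_lt_const hq
  obtain ⟨d, hd, hsub⟩ := mem_nhdsGE_iff_exists_Icc_subset.1 hev
  refine Eventually.frequently ?_
  filter_upwards [Ioc_mem_nhdsGT (lt_min hd hx.2)] with z hz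
  have hzb : z ≤ b := hz.2.trans (min_le_right _ _)
  have hzd : z ≤ d := hz.2.trans (min_le_left _ _)
  have hInt : ∫ τ in x..z, (c + lam * |f τ|) ≤ ∫ _ in x..z, q := by
    refine intervalIntegral.integral_mono_on hz.1.le
      (ContinuousOn.intervalIntegrable_of_Icc hz.1.le (hcont.mono (Icc_subset_Icc hx.1 hzb)))
      (by simp) fun τ hτ => ?_
    have : c + lam * |f τ| < q := hsub ⟨hτ.1, hτ.2.trans hzd⟩
    exact this.le
  rw [intervalIntegral.integral_const, smul_eq_mul] at hInt
  have hzx : 0 < z - x := sub_pos.2 hz.1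
  have h1 := hfi x ⟨hx.1, hx.2.le⟩ z ⟨hz.1.le, hzb⟩
  rw [slope_def_field, div_lt_iff₀ hzx]
  nlinarith

lemma neg_exp_le_add_integral {F : ℝ → ℝ} {u₀ s : ℝ} (hs : 0 ≤ s) (hc : 0 ≤ c) (hlam : 0 ≤ lam)
    (hF : IntervalIntegrable F volume 0 s)
    (hlow : ∀ r ∈ Ioo 0 s, -(c + lam * |u₀ + ∫ τ in (0:ℝ)..r, F τ|) ≤ F r) :
    -((c + |u₀| + 1) * Real.exp ((lam + 1) * s)) ≤ u₀ + ∫ τ in (0:ℝ)..s, F τ := by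
  set A := c + |u₀| + 1
  have hA : 0 < A := by positivity
  have hcont : ContinuousOn (fun r => -(u₀ + ∫ τ in (0:ℝ)..r, F τ)) (Icc 0 s) := by
    have := intervalIntegral.continuousOn_primitive_interval' hF left_mem_uIcc
    rw [uIcc_of_le hs] at this
    fun_prop
  have key := le_of_sub_le_integral (c := c) (lam := lam)
    (f := fun r => -(u₀ + ∫ τ in (0:ℝ)..r, F τ)) (B := fun r => A * Real.exp ((lam + 1) * r))
    (B' := fun r => A * (Real.exp ((lam + 1) * r) * (lam + 1))) hs hcont ?_ ?_ ?_ ?_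
  · linarith
  · intro r hr z hz
    have hsub : ∀ p q, 0 ≤ p → p ≤ q → q ≤ s → IntervalIntegrable F volume p q :=
      fun p q hp hpq hq => hF.mono_set (by
        rw [uIcc_of_le hpq, uIcc_of_le hs]; exact Icc_subset_Icc hp hq)
    have h1 := intervalIntegral.integral_add_adjacent_intervals
      (hsub 0 r le_rfl hr.1 hr.2) (hsub r z hr.1 hz.1 hz.2)
    have h2 : -∫ τ in r..z, F τ ≤
        ∫ τ in r..z, (c + lam * |(-(u₀ + ∫ τ in (0:ℝ)..τ, F τ))|) := by
      rw [← intervalIntegral.integral_neg]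
      refine intervalIntegral.integral_mono_on_of_le_Ioo hz.1 (hsub r z hr.1 hz.1 hz.2).neg
        (ContinuousOn.intervalIntegrable_of_Icc hz.1 ?_) fun τ hτ => ?_
      · have := hcont.mono (Icc_subset_Icc hr.1 hz.2)
        fun_prop
      · rw [abs_neg]
        have := hlow τ ⟨hr.1.trans_lt hτ.1, hτ.2.trans_le hz.2⟩
        linarith
    linarith
  · simp only [intervalIntegral.integral_same, mul_zero, Real.exp_zero, mul_one, A, add_zero]
    linarith [neg_abs_le u₀]
  · intro r
    have h1 : HasDerivAt (fun r : ℝ => (lam + 1) * r) (lam + 1) r := by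
      simpa using (hasDerivAt_id r).const_mul (lam + 1)
    exact h1.exp.const_mul A
  · intro r hr
    have h1 : 1 ≤ Real.exp ((lam + 1) * r) :=
      Real.one_le_exp (mul_nonneg (by linarith) hr.1)
    rw [abs_of_pos (by positivity)]
    have h2 : c < A := by have := abs_nonneg u₀; simp only [A]; linarith
    nlinarith

lemma exp_le_sub_of_subsolution {e g k F G : ℝ → ℝ} {A ε : ℝ} (hab : a ≤ b) (hlam : 0 ≤ lam)
    (hε : lam * ε < A * Real.exp (-((lam + 1) * (b - a))))
    (he : ContinuousOn e (Icc a b)) (hg : ContinuousOn g (Icc a b))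
    (hF : IntervalIntegrable F volume a b) (hG : IntervalIntegrable G volume a b)
    (heF : ∀ r ∈ Icc a b, ∀ s ∈ Icc r b, e s - e r = ∫ τ in r..s, F τ)
    (hgG : ∀ r ∈ Icc a b, ∀ s ∈ Icc r b, g s - g r ≤ ∫ τ in r..s, G τ)
    (hFG : ∀ r ∈ Ioo a b, |F r - G r| ≤ lam * |k r - g r|)
    (hke : ∀ r ∈ Ioo a b, |k r - e r| ≤ ε) (hA : 0 < A) (ha : A ≤ e a - g a) :
    A * Real.exp (-((lam + 1) * (b - a))) ≤ e b - g b := by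
  have key := le_of_sub_le_integral (c := lam * ε) (lam := lam)
    (f := fun r => g r - e r) (B := fun r => -A * Real.exp (-((lam + 1) * (r - a))))
    (B' := fun r => -A * (Real.exp (-((lam + 1) * (r - a))) * (-(lam + 1))))
    hab (hg.sub he) ?_ ?_ ?_ ?_
  · linarith
  · intro r hr z hz
    have hss : uIcc r z ⊆ uIcc a b := by
      rw [uIcc_of_le hz.1, uIcc_of_le hab]; exact Icc_subset_Icc hr.1 hz.2
    have hFi := hF.mono_set hss
    have hGi := hG.mono_set hss
    have h1 := heF r hr z hz
    have h2 := hgG r hr z hz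
    have h3 : (∫ τ in r..z, G τ) - ∫ τ in r..z, F τ ≤
        ∫ τ in r..z, (lam * ε + lam * |g τ - e τ|) := by
      rw [← intervalIntegral.integral_sub hGi hFi]
      refine intervalIntegral.integral_mono_on_of_le_Ioo hz.1 (hGi.sub hFi)
        (ContinuousOn.intervalIntegrable_of_Icc hz.1 ?_) fun τ hτ => ?_
      · have h4 := hg.mono (Icc_subset_Icc hr.1 hz.2)
        have h5 := he.mono (Icc_subset_Icc hr.1 hz.2)
        fun_prop
      · have hτ' : τ ∈ Ioo a b := ⟨hr.1.trans_lt hτ.1, hτ.2.trans_le hz.2⟩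
        have h4 := (abs_le.1 (hFG τ hτ')).1
        have h5 : |k τ - g τ| ≤ ε + |g τ - e τ| := by
          have := abs_sub_le (k τ) (e τ) (g τ)
          rw [abs_sub_comm (e τ) (g τ)] at this
          linarith [hke τ hτ']
        have h6 := mul_le_mul_of_nonneg_left h5 hlam
        linarith
    linarith
  · simp only [sub_self, mul_zero, neg_zero, Real.exp_zero]
    linarith
  · intro r
    have h1 : HasDerivAt (fun r : ℝ => -((lam + 1) * (r - a))) (-(lam + 1)) r := by
      simpa using! (((hasDerivAt_id r).sub_const a).const_mul (lam + 1)).neg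
    exact h1.exp.const_mul (-A)
  · intro r hr
    have h1 : A * Real.exp (-((lam + 1) * (b - a))) ≤ A * Real.exp (-((lam + 1) * (r - a))) := by
      have := hr.2.le
      gcongr
    have h2 : 0 < A * Real.exp (-((lam + 1) * (r - a))) := by positivity
    rw [neg_mul, abs_neg, abs_of_pos h2]
    linarith

end Comparison

/-- Lipschitz curves in `M` joining `x` to `y` in time `t`. -/
def ConnectingCurve (M : Set (Euc n)) (x y : Euc n) (t : ℝ) (γ : ℝ → Euc n) : Prop :=
  (∃ K : ℝ≥0, LipschitzOnWith K γ (Icc 0 t)) ∧ (∀ τ ∈ Icc (0:ℝ) t, γ τ ∈ M) ∧ γ 0 = x ∧ γ t = y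

/-- The Lagrangian along `γ`, with its value argument prescribed by `w`. -/
def runningCost (L : Euc n → Euc n → ℝ → ℝ) (w : Euc n → ℝ → ℝ) (γ : ℝ → Euc n) (τ : ℝ) : ℝ :=
  L (γ τ) (deriv γ τ) (w (γ τ) τ)

/-- The actions of the curves joining `x` to `y` in time `t`. -/
def actionSet (M : Set (Euc n)) (L : Euc n → Euc n → ℝ → ℝ) (w : Euc n → ℝ → ℝ) (x y : Euc n)
    (t : ℝ) : Set ℝ :=
  {a | ∃ γ, ConnectingCurve M x y t γ ∧ a = ∫ τ in (0:ℝ)..t, runningCost L w γ τ}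

/-- The implicit variational principle for curves starting at `x₀` with value `u₀`. -/
structure IsValueFunction (M : Set (Euc n)) (L : Euc n → Euc n → ℝ → ℝ) (x₀ : Euc n) (u₀ : ℝ)
    (w : Euc n → ℝ → ℝ) : Prop where
  continuousOn : ContinuousOn (fun q : Euc n × ℝ => w q.1 q.2) (M ×ˢ Ioi 0)
  eq_add_sInf : ∀ y ∈ M, ∀ t > (0:ℝ), w y t = u₀ + sInf (actionSet M L w x₀ y t)

section Curves

variable {M : Set (Euc n)} {L : Euc n → Euc n → ℝ → ℝ} {lam : ℝ} {x y z : Euc n}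
  {r t : ℝ} {γ ζ : ℝ → Euc n} {w : Euc n → ℝ → ℝ}

lemma ConnectingCurve.restrict (hγ : ConnectingCurve M x y t γ) (hrt : r ≤ t) :
    ConnectingCurve M x (γ r) r γ := by
  obtain ⟨⟨K, hK⟩, hM, h0, -⟩ := hγ
  exact ⟨⟨K, hK.mono (Icc_subset_Icc_right hrt)⟩,
    fun τ hτ => hM τ ⟨hτ.1, hτ.2.trans hrt⟩, h0, rfl⟩

lemma ConnectingCurve.reverse (hγ : ConnectingCurve M x y t γ) :
    ConnectingCurve M y x t fun τ => γ (t - τ) := by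
  obtain ⟨⟨K, hK⟩, hM, h0, ht⟩ := hγ
  have hmem : ∀ τ ∈ Icc 0 t, t - τ ∈ Icc 0 t := fun τ hτ =>
    ⟨by linarith [hτ.2], by linarith [hτ.1]⟩
  refine ⟨⟨K, LipschitzOnWith.of_dist_le_mul fun a ha b hb => ?_⟩,
    fun τ hτ => hM _ (hmem τ hτ), by simpa using ht, by simpa using h0⟩
  simpa only [dist_sub_left] using hK.dist_le_mul _ (hmem a ha) _ (hmem b hb)

lemma ConnectingCurve.splice (hζ : ConnectingCurve M x (γ r) r ζ) (hγ : ConnectingCurve M z y t γ)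
    (hr : 0 ≤ r) (hrt : r ≤ t) :
    ConnectingCurve M x y t fun τ => if τ ≤ r then ζ τ else γ τ := by
  obtain ⟨⟨K₁, hK₁⟩, hM₁, h₁0, h₁r⟩ := hζ
  obtain ⟨⟨K₂, hK₂⟩, hM₂, -, h₂t⟩ := hγ
  refine ⟨⟨max K₁ K₂, LipschitzOnWith.of_dist_le_mul ?_⟩, ?_, by simp [hr, h₁0], ?_⟩
  · have key : ∀ a ∈ Icc 0 t, ∀ b ∈ Icc 0 t, a ≤ b →
        dist (if a ≤ r then ζ a else γ a) (if b ≤ r then ζ b else γ b) ≤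
          (max K₁ K₂ : ℝ≥0) * dist a b := by
      intro a ha b hb hab
      have hm₁ : (K₁ : ℝ) ≤ (max K₁ K₂ : ℝ≥0) := by exact_mod_cast le_max_left K₁ K₂
      have hm₂ : (K₂ : ℝ) ≤ (max K₁ K₂ : ℝ≥0) := by exact_mod_cast le_max_right K₁ K₂
      by_cases har : a ≤ r
      · by_cases hbr : b ≤ r
        · rw [if_pos har, if_pos hbr]
          refine (hK₁.dist_le_mul a ⟨ha.1, har⟩ b ⟨hb.1, hbr⟩).trans ?_
          gcongr
        · rw [if_pos har, if_neg hbr]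
          push Not at hbr
          have h1 := hK₁.dist_le_mul a ⟨ha.1, har⟩ r ⟨hr, le_rfl⟩
          have h2 := hK₂.dist_le_mul r ⟨hr, hrt⟩ b hb
          rw [h₁r] at h1
          rw [Real.dist_eq, abs_sub_comm, abs_of_nonneg (by linarith)] at h1 h2 ⊢
          have h3 := dist_triangle (ζ a) (γ r) (γ b)
          have h4 : (K₁ : ℝ) * (r - a) ≤ (max K₁ K₂ : ℝ≥0) * (r - a) :=
            mul_le_mul_of_nonneg_right hm₁ (by linarith)
          have h5 : (K₂ : ℝ) * (b - r) ≤ (max K₁ K₂ : ℝ≥0) * (b - r) :=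
            mul_le_mul_of_nonneg_right hm₂ (by linarith)
          linarith
      · have hbr : ¬ b ≤ r := fun h => har (hab.trans h)
        rw [if_neg har, if_neg hbr]
        refine (hK₂.dist_le_mul a ha b hb).trans ?_
        gcongr
    intro a ha b hb
    rcases le_total a b with h | h
    · exact key a ha b hb h
    · rw [dist_comm, dist_comm a b]
      exact key b hb a ha h
  · intro τ hτ
    dsimp only
    split_ifs with h
    · exact hM₁ τ ⟨hτ.1, h⟩
    · exact hM₂ τ hτ
  · dsimp only
    split_ifs with h
    · rw [le_antisymm h hrt, h₁r, ← h₂t, le_antisymm h hrt]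
    · exact h₂t

lemma ConnectingCurve.continuousOn_value (hγ : ConnectingCurve M x y t γ)
    (hw : ContinuousOn (fun q : Euc n × ℝ => w q.1 q.2) (M ×ˢ Ioi 0)) :
    ContinuousOn (fun τ => w (γ τ) τ) (Ioc 0 t) := by
  obtain ⟨⟨K, hK⟩, hM, -, -⟩ := hγ
  have h1 : ContinuousOn (fun τ => (γ τ, τ)) (Ioc 0 t) :=
    (hK.continuousOn.mono Ioc_subset_Icc_self).prodMk continuousOn_id
  exact hw.comp h1 fun τ hτ => ⟨hM τ ⟨hτ.1.le, hτ.2⟩, hτ.1⟩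

lemma TameLagrangian.intervalIntegrable_of_le (hL : TameLagrangian M L lam)
    (hγ : ConnectingCurve M x y t γ)
    (hw : ContinuousOn (fun q : Euc n × ℝ => w q.1 q.2) (M ×ˢ Ioi 0)) {a B : ℝ} (ha : 0 ≤ a)
    (hat : a ≤ t) (hB : ∀ τ ∈ Ioo a t, |w (γ τ) τ| ≤ B) :
    IntervalIntegrable (runningCost L w γ) volume a t := by
  have hcw := (hγ.continuousOn_value hw).mono
    (fun τ (hτ : τ ∈ Ioo a t) => (⟨ha.trans_lt hτ.1, hτ.2.le⟩ : τ ∈ Ioc 0 t))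
  obtain ⟨⟨K, hK⟩, hM, -, -⟩ := hγ
  obtain ⟨C, hC⟩ := hL.lower
  obtain ⟨D, hD⟩ := hL.upper K
  have hcγ := hK.continuousOn.mono
    (fun τ (hτ : τ ∈ Ioo a t) => (⟨ha.trans hτ.1.le, hτ.2.le⟩ : τ ∈ Icc 0 t))
  rw [intervalIntegrable_iff_integrableOn_Ioo_of_le hat]
  refine Integrable.of_bound ?_ (|C| + |D| + lam * B) ?_
  · refine AEMeasurable.aestronglyMeasurable ?_
    exact hL.measurable.comp_aemeasurable ((hcγ.aemeasurable measurableSet_Ioo).prodMk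
      ((measurable_deriv γ).aemeasurable.prodMk (hcw.aemeasurable measurableSet_Ioo)))
  · refine (ae_restrict_mem measurableSet_Ioo).mono fun τ hτ => ?_
    have hτM : γ τ ∈ M := hM τ ⟨ha.trans hτ.1.le, hτ.2.le⟩
    have hd : ‖deriv γ τ‖ ≤ K :=
      norm_deriv_le_of_lipschitzOn (Icc_mem_nhds (ha.trans_lt hτ.1) hτ.2) hK
    have h1 := hC _ hτM (deriv γ τ)
    have h2 := hD _ hτM _ hd
    have h3 := abs_le.1 (hL.abs_sub_le (γ τ) (deriv γ τ) (w (γ τ) τ) 0)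
    rw [sub_zero] at h3
    have h4 := mul_le_mul_of_nonneg_left (hB τ hτ) hL.lam_pos.le
    have h5 := le_abs_self C
    have h6 := le_abs_self D
    have h7 := abs_nonneg C
    have h8 := abs_nonneg D
    rw [Real.norm_eq_abs, runningCost]
    exact abs_le.2 ⟨by linarith, by linarith⟩

lemma TameLagrangian.intervalIntegrable_of_pos (hL : TameLagrangian M L lam)
    (hγ : ConnectingCurve M x y t γ)
    (hw : ContinuousOn (fun q : Euc n × ℝ => w q.1 q.2) (M ×ˢ Ioi 0)) (hr : 0 < r)
    (hrt : r ≤ t) : IntervalIntegrable (runningCost L w γ) volume r t := by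
  obtain ⟨B, hB⟩ := isCompact_Icc.exists_bound_of_continuousOn
    ((hγ.continuousOn_value hw).mono
      (fun τ (hτ : τ ∈ Icc r t) => (⟨hr.trans_le hτ.1, hτ.2⟩ : τ ∈ Ioc 0 t)))
  exact hL.intervalIntegrable_of_le hγ hw hr.le hrt fun τ hτ => hB τ (Ioo_subset_Icc_self hτ)

lemma TameLagrangian.splice_mem_actionSet (hL : TameLagrangian M L lam)
    (hζ : ConnectingCurve M x (γ r) r ζ) (hγ : ConnectingCurve M z y t γ)
    (hw : ContinuousOn (fun q : Euc n × ℝ => w q.1 q.2) (M ×ˢ Ioi 0)) (hr : 0 < r)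
    (hrt : r ≤ t) (hInt : IntervalIntegrable (runningCost L w ζ) volume 0 r) :
    (∫ τ in (0:ℝ)..r, runningCost L w ζ τ) + (∫ τ in r..t, runningCost L w γ τ) ∈
      actionSet M L w x y t := by
  set η : ℝ → Euc n := fun τ => if τ ≤ r then ζ τ else γ τ with hη
  have h₁ : EqOn (runningCost L w ζ) (runningCost L w η) (Ioo 0 r) := fun τ hτ => by
    have hev : η =ᶠ[𝓝 τ] ζ := by
      filter_upwards [Iio_mem_nhds hτ.2] with s hs
      simp [hη, le_of_lt (mem_Iio.1 hs)]
    rw [runningCost, runningCost, hev.deriv_eq, hev.eq_of_nhds]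
  have h₂ : EqOn (runningCost L w γ) (runningCost L w η) (Ioo r t) := fun τ hτ => by
    have hev : η =ᶠ[𝓝 τ] γ := by
      filter_upwards [Ioi_mem_nhds hτ.1] with s hs
      simp [hη, not_le.2 (mem_Ioi.1 hs)]
    rw [runningCost, runningCost, hev.deriv_eq, hev.eq_of_nhds]
  refine ⟨η, hζ.splice hγ hr.le hrt, ?_⟩
  rw [intervalIntegral.integral_congr_Ioo_of_le hr.le h₁,
    intervalIntegral.integral_congr_Ioo_of_le hrt h₂]
  exact intervalIntegral.integral_add_adjacent_intervals
    (hInt.congr_uIoo (by rwa [uIoo_of_le hr.le]))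
    ((hL.intervalIntegrable_of_pos hγ hw hr hrt).congr_uIoo (by rwa [uIoo_of_le hrt]))

end Curves

section ValueFunction

variable {M : Set (Euc n)} {L : Euc n → Euc n → ℝ → ℝ} {lam : ℝ} {x₀ x y : Euc n} {u₀ r t : ℝ}
  {γ : ℝ → Euc n} {w : Euc n → ℝ → ℝ}

lemma ConnectingCurve.end_mem (hγ : ConnectingCurve M x y t γ) (ht : 0 ≤ t) : y ∈ M :=
  hγ.2.2.2 ▸ hγ.2.1 t (right_mem_Icc.2 ht)

lemma TameLagrangian.exists_neg_exp_le (hL : TameLagrangian M L lam) (u₀ : ℝ) {B : ℝ}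
    (hB : 0 ≤ B) :
    ∃ A, 0 ≤ A ∧ ∀ {x y : Euc n} {t : ℝ} {γ : ℝ → Euc n} {w : Euc n → ℝ → ℝ}, 0 ≤ t →
      ConnectingCurve M x y t γ → IntervalIntegrable (runningCost L w γ) volume 0 t →
      (∀ r ∈ Ioo 0 t, |w (γ r) r| ≤ B + |u₀ + ∫ τ in (0:ℝ)..r, runningCost L w γ τ|) →
      -(A * Real.exp ((lam + 1) * t)) ≤ u₀ + ∫ τ in (0:ℝ)..t, runningCost L w γ τ := by
  obtain ⟨C, hC⟩ := hL.lower
  have hlam := hL.lam_pos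
  refine ⟨|C| + lam * B + |u₀| + 1, by positivity, fun {x y t γ w} ht hγ hInt hbd => ?_⟩
  refine neg_exp_le_add_integral ht (by positivity) hlam.le hInt fun r hr => ?_
  have h1 := hC (γ r) (hγ.2.1 r ⟨hr.1.le, hr.2.le⟩) (deriv γ r)
  have h2 := (abs_le.1 (hL.abs_sub_le (γ r) (deriv γ r) (w (γ r) r) 0)).1
  rw [sub_zero] at h2
  have h3 := mul_le_mul_of_nonneg_left (hbd r hr) hlam.le
  have h4 := le_abs_self C
  rw [runningCost]
  linarith

namespace IsValueFunction

lemma eq_of_not_bddBelow (hw : IsValueFunction M L x₀ u₀ w) (hy : y ∈ M) (ht : 0 < t)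
    (h : ¬ BddBelow (actionSet M L w x₀ y t)) : w y t = u₀ := by
  rw [hw.eq_add_sInf y hy t ht, Real.sInf_of_not_bddBelow h, add_zero]

lemma le_of_bddBelow (hw : IsValueFunction M L x₀ u₀ w) (hγ : ConnectingCurve M x₀ y t γ)
    (ht : 0 < t) (h : BddBelow (actionSet M L w x₀ y t)) :
    w y t ≤ u₀ + ∫ τ in (0:ℝ)..t, runningCost L w γ τ := by
  rw [hw.eq_add_sInf y (hγ.end_mem ht.le) t ht]
  gcongr
  exact csInf_le h ⟨γ, hγ, rfl⟩

lemma le_max (hw : IsValueFunction M L x₀ u₀ w) (hγ : ConnectingCurve M x₀ y t γ) (ht : 0 < t) :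
    w y t ≤ max u₀ (u₀ + ∫ τ in (0:ℝ)..t, runningCost L w γ τ) := by
  by_cases h : BddBelow (actionSet M L w x₀ y t)
  · exact (hw.le_of_bddBelow hγ ht h).trans (le_max_right _ _)
  · exact (hw.eq_of_not_bddBelow (hγ.end_mem ht.le) ht h).le.trans (le_max_left _ _)

lemma exists_neg_exp_le (hL : TameLagrangian M L lam) (hw : IsValueFunction M L x₀ u₀ w) :
    ∃ A, 0 ≤ A ∧ ∀ y ∈ M, ∀ t > (0:ℝ), BddBelow (actionSet M L w x₀ y t) →
      w y t < u₀ → -(A * Real.exp ((lam + 1) * t)) - 1 ≤ w y t := by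
  obtain ⟨A, hA0, hA⟩ := hL.exists_neg_exp_le u₀ (B := |u₀| + 1) (by positivity)
  refine ⟨A, hA0, fun y hy t ht hbdd hlt => ?_⟩
  have heq := hw.eq_add_sInf y hy t ht
  have hneg : sInf (actionSet M L w x₀ y t) < 0 := by linarith
  have hne : (actionSet M L w x₀ y t).Nonempty := by
    rw [nonempty_iff_ne_empty]
    rintro h
    simp [h] at hneg
  obtain ⟨a, ⟨γ, hγ, rfl⟩, ha⟩ := exists_lt_of_csInf_lt hne
    (lt_min (lt_add_one (sInf (actionSet M L w x₀ y t))) hneg)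
  obtain ⟨ha1, ha0⟩ := lt_min_iff.1 ha
  have hInt : IntervalIntegrable (runningCost L w γ) volume 0 t := by
    by_contra h
    rw [intervalIntegral.integral_undef h] at ha0
    exact lt_irrefl _ ha0
  have hlow := hA ht.le hγ hInt fun r hr => ?_
  · linarith
  have hγr := hγ.restrict hr.2.le
  set I := ∫ τ in (0:ℝ)..r, runningCost L w γ τ with hI
  have hsplit := intervalIntegral.integral_add_adjacent_intervals
    (hInt.mono_set (by
      rw [uIcc_of_le hr.1.le, uIcc_of_le ht.le]; exact Icc_subset_Icc_right hr.2.le))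
    (hL.intervalIntegrable_of_pos hγ hw.continuousOn hr.1 hr.2.le)
  have hmin : ∀ b ∈ actionSet M L w x₀ (γ r) r, min 0 (I - 1) ≤ b := by
    rintro _ ⟨ζ, hζ, rfl⟩
    by_cases hζi : IntervalIntegrable (runningCost L w ζ) volume 0 r
    · have h1 := csInf_le hbdd
        (hL.splice_mem_actionSet hζ hγ hw.continuousOn hr.1 hr.2.le hζi)
      exact (min_le_right _ _).trans (by linarith)
    · rw [intervalIntegral.integral_undef hζi]
      exact min_le_left _ _
  have hup := hw.le_of_bddBelow hγr hr.1 ⟨_, hmin⟩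
  have hlo : u₀ + min 0 (I - 1) ≤ w (γ r) r := by
    rw [hw.eq_add_sInf (γ r) (hγr.end_mem hr.1.le) r hr.1]
    gcongr
    exact le_csInf ⟨_, γ, hγr, rfl⟩ hmin
  have h1 := abs_nonneg (u₀ + I)
  have h2 := neg_abs_le u₀
  have h3 := neg_abs_le (u₀ + I)
  have h4 := le_abs_self (u₀ + I)
  have h5 := abs_nonneg u₀
  refine abs_le.2 ⟨?_, by linarith⟩
  rcases min_choice 0 (I - 1) with h | h <;> rw [h] at hlo <;> linarith

lemma exists_lower_bound (hL : TameLagrangian M L lam) (hw : IsValueFunction M L x₀ u₀ w) (T : ℝ) :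
    ∃ B, 0 ≤ B ∧ ∀ y ∈ M, ∀ t > (0:ℝ), t ≤ T → -B ≤ w y t := by
  obtain ⟨A, hA0, hA⟩ := hw.exists_neg_exp_le hL
  refine ⟨A * Real.exp ((lam + 1) * T) + 1 + |u₀|, by positivity, fun y hy t ht htT => ?_⟩
  have hlam := hL.lam_pos
  have h1 : A * Real.exp ((lam + 1) * t) ≤ A * Real.exp ((lam + 1) * T) := by gcongr
  have h2 : 0 ≤ A * Real.exp ((lam + 1) * t) := by positivity
  have h3 := neg_abs_le u₀
  have h4 := abs_nonneg u₀
  rcases le_or_gt u₀ (w y t) with h | h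
  · linarith
  by_cases hb : BddBelow (actionSet M L w x₀ y t)
  · linarith [hA y hy t ht hb h]
  · linarith [hw.eq_of_not_bddBelow hy ht hb]

lemma intervalIntegrable (hL : TameLagrangian M L lam) (hw : IsValueFunction M L x₀ u₀ w)
    (hγ : ConnectingCurve M x₀ y t γ) (ht : 0 ≤ t) :
    IntervalIntegrable (runningCost L w γ) volume 0 t := by
  by_contra hInt
  obtain ⟨B, hB0, hB⟩ := hw.exists_lower_bound hL t
  refine hInt (hL.intervalIntegrable_of_le hγ hw.continuousOn le_rfl ht (B := B + |u₀|)
    fun r hr => ?_)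
  have hγr := hγ.restrict hr.2.le
  have hr_int : ¬ IntervalIntegrable (runningCost L w γ) volume 0 r := fun h =>
    hInt (h.trans (hL.intervalIntegrable_of_pos hγ hw.continuousOn hr.1 hr.2.le))
  have h1 := hw.le_max hγr hr.1
  rw [intervalIntegral.integral_undef hr_int, add_zero, max_self] at h1
  have h2 := hB (γ r) (hγr.end_mem hr.1.le) r hr.1 hr.2.le
  exact abs_le.2 ⟨by linarith [abs_nonneg u₀], by linarith [le_abs_self u₀]⟩

lemma bddBelow (hL : TameLagrangian M L lam) (hw : IsValueFunction M L x₀ u₀ w) (ht : 0 ≤ t) :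
    BddBelow (actionSet M L w x₀ y t) := by
  obtain ⟨B, hB0, hB⟩ := hw.exists_lower_bound hL t
  obtain ⟨A, hA0, hA⟩ := hL.exists_neg_exp_le u₀ (B := B + |u₀|) (by positivity)
  refine ⟨-(A * Real.exp ((lam + 1) * t)) - u₀, ?_⟩
  rintro _ ⟨γ, hγ, rfl⟩
  have := hA ht hγ (hw.intervalIntegrable hL hγ ht) fun r hr => ?_
  · linarith
  have hγr := hγ.restrict hr.2.le
  have h1 := hw.le_max hγr hr.1
  have h2 := hB (γ r) (hγr.end_mem hr.1.le) r hr.1 hr.2.le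
  set I := ∫ τ in (0:ℝ)..r, runningCost L w γ τ
  have h3 : max u₀ (u₀ + I) ≤ |u₀| + |u₀ + I| :=
    max_le (by linarith [le_abs_self u₀, abs_nonneg (u₀ + I)])
      (by linarith [le_abs_self (u₀ + I), abs_nonneg u₀])
  exact abs_le.2 ⟨by linarith [abs_nonneg u₀, abs_nonneg (u₀ + I)], by linarith⟩

lemma le_add_integral (hL : TameLagrangian M L lam) (hw : IsValueFunction M L x₀ u₀ w)
    (hγ : ConnectingCurve M x₀ y t γ) (ht : 0 < t) :
    w y t ≤ u₀ + ∫ τ in (0:ℝ)..t, runningCost L w γ τ :=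
  hw.le_of_bddBelow hγ ht (hw.bddBelow hL ht.le)

lemma sub_le_integral (hL : TameLagrangian M L lam) (hw : IsValueFunction M L x₀ u₀ w)
    (hγ : ConnectingCurve M x₀ y t γ) (hr : 0 < r) (hrt : r ≤ t) :
    w y t - w (γ r) r ≤ ∫ τ in r..t, runningCost L w γ τ := by
  have hγr := hγ.restrict hrt
  have ht : 0 < t := hr.trans_le hrt
  have h1 : sInf (actionSet M L w x₀ y t) - (∫ τ in r..t, runningCost L w γ τ) ≤
      sInf (actionSet M L w x₀ (γ r) r) := by
    refine le_csInf ⟨_, γ, hγr, rfl⟩ ?_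
    rintro _ ⟨ζ, hζ, rfl⟩
    have := csInf_le (hw.bddBelow hL ht.le) (hL.splice_mem_actionSet hζ hγ hw.continuousOn hr hrt
      (hw.intervalIntegrable hL hζ hr.le))
    linarith
  rw [hw.eq_add_sInf y (hγ.end_mem ht.le) t ht,
    hw.eq_add_sInf (γ r) (hγr.end_mem hr.le) r hr]
  linarith

lemma exists_almost_minimizer (hL : TameLagrangian M L lam) (hw : IsValueFunction M L x₀ u₀ w)
    (hγ : ConnectingCurve M x₀ y t γ) (ht : 0 < t) {ε : ℝ} (hε : 0 < ε) :
    ∃ η, ConnectingCurve M x₀ y t η ∧ ∀ r ∈ Ioc 0 t,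
      |w (η r) r - (u₀ + ∫ τ in (0:ℝ)..r, runningCost L w η τ)| ≤ ε := by
  obtain ⟨_, ⟨η, hη, rfl⟩, hlt⟩ := exists_lt_of_csInf_lt
    (s := actionSet M L w x₀ y t) ⟨_, γ, hγ, rfl⟩ (lt_add_of_pos_right _ hε)
  refine ⟨η, hη, fun r hr => ?_⟩
  have hηr := hη.restrict hr.2
  have h1 := hw.eq_add_sInf y (hη.end_mem ht.le) t ht
  have h2 := hw.le_add_integral hL hηr hr.1
  have h3 := hw.sub_le_integral hL hη hr.1 hr.2
  have h4 := intervalIntegral.integral_add_adjacent_intervals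
    (hw.intervalIntegrable hL hηr hr.1.le)
    (hL.intervalIntegrable_of_pos hη hw.continuousOn hr.1 hr.2)
  exact abs_le.2 ⟨by linarith, by linarith⟩

/-- Comparison with a perturbed trajectory `e` of the equation `e' = L(γ, γ', e)`. -/
lemma exp_le_sub (hL : TameLagrangian M L lam) (hw : IsValueFunction M L x₀ u₀ w)
    (hγ : ConnectingCurve M x₀ y t γ) (ht : 0 < t) {e k F : ℝ → ℝ} {A ε : ℝ} (hA : 0 < A)
    (hε : lam * ε < A * Real.exp (-((lam + 1) * t)))
    (hF : IntervalIntegrable F volume 0 t) (he : ∀ r ∈ Icc 0 t, e r = e 0 + ∫ τ in (0:ℝ)..r, F τ)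
    (hFk : ∀ r ∈ Ioo 0 t, F r = L (γ r) (deriv γ r) (k r))
    (hke : ∀ r ∈ Ioo 0 t, |k r - e r| ≤ ε) (h0 : A < e 0 - u₀) :
    A * Real.exp (-((lam + 1) * t)) ≤ e t - w y t := by
  have hG := hw.intervalIntegrable hL hγ ht.le
  have hsub : ∀ p q, 0 ≤ p → p ≤ q → q ≤ t → uIcc p q ⊆ uIcc 0 t := fun p q hp hpq hq => by
    rw [uIcc_of_le hpq, uIcc_of_le ht.le]; exact Icc_subset_Icc hp hq
  have hcF := intervalIntegral.continuousOn_primitive_interval' hF left_mem_uIcc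
  have hcG := intervalIntegral.continuousOn_primitive_interval' hG left_mem_uIcc
  rw [uIcc_of_le ht.le] at hcF hcG
  have hce : ContinuousOn e (Icc 0 t) := ContinuousOn.congr (by fun_prop) he
  have hlim : ContinuousWithinAt
      (fun r => e r - (u₀ + ∫ τ in (0:ℝ)..r, runningCost L w γ τ)) (Icc 0 t) 0 :=
    ContinuousOn.continuousWithinAt (by fun_prop) (left_mem_Icc.2 ht.le)
  have hev : ∀ᶠ r in 𝓝[>] (0:ℝ),
      A < e r - (u₀ + ∫ τ in (0:ℝ)..r, runningCost L w γ τ) := by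
    have h1 := Tendsto.eventually_const_lt (u := A) (by simpa using h0) hlim.tendsto
    rw [nhdsWithin_Icc_eq_nhdsGE ht] at h1
    exact h1.filter_mono (nhdsWithin_mono _ Ioi_subset_Ici_self)
  obtain ⟨a, haA, ha0, hat⟩ := (hev.and (Ioc_mem_nhdsGT ht)).exists
  have hexp : A * Real.exp (-((lam + 1) * t)) ≤ A * Real.exp (-((lam + 1) * (t - a))) := by
    have := hL.lam_pos
    gcongr
    linarith
  have hyt : γ t = y := hγ.2.2.2
  refine hexp.trans ?_
  rw [← hyt]
  refine exp_le_sub_of_subsolution (g := fun r => w (γ r) r) (k := k) (F := F)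
    (G := runningCost L w γ) hat hL.lam_pos.le (hε.trans_le hexp)
    (hce.mono (Icc_subset_Icc_left ha0.le))
    ((hγ.continuousOn_value hw.continuousOn).mono fun r hr => ⟨ha0.trans_le hr.1, hr.2⟩)
    (hF.mono_set (hsub a t ha0.le hat le_rfl)) (hG.mono_set (hsub a t ha0.le hat le_rfl))
    ?_ ?_ ?_ (fun r hr => hke r ⟨ha0.trans hr.1, hr.2⟩) hA ?_
  · intro r hr s hs
    have hr0 : 0 ≤ r := ha0.le.trans hr.1
    rw [he s ⟨hr0.trans hs.1, hs.2⟩, he r ⟨hr0, hr.2⟩,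
      ← intervalIntegral.integral_add_adjacent_intervals
        (hF.mono_set (hsub 0 r le_rfl hr0 hr.2)) (hF.mono_set (hsub r s hr0 hs.1 hs.2))]
    ring
  · intro r hr s hs
    have hs' := (hγ.restrict hs.2)
    exact hw.sub_le_integral hL hs' (ha0.trans_le hr.1) hs.1
  · intro r hr
    rw [hFk r ⟨ha0.trans hr.1, hr.2⟩]
    exact hL.abs_sub_le _ _ _ _
  · have := hw.le_add_integral hL (hγ.restrict hat) ha0
    linarith

lemma eq_of_no_curve (hw : IsValueFunction M L x₀ u₀ w) (hy : y ∈ M) (ht : 0 < t)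
    (h : ∀ γ, ¬ ConnectingCurve M x₀ y t γ) : w y t = u₀ := by
  have : actionSet M L w x₀ y t = ∅ :=
    eq_empty_of_forall_notMem fun a ⟨γ, hγ, _⟩ => h γ hγ
  rw [hw.eq_add_sInf y hy t ht, this, Real.sInf_empty, add_zero]

lemma lt_of_lt (hL : TameLagrangian M L lam) (hw : IsValueFunction M L x₀ u₀ w) {v₀ : ℝ}
    {w' : Euc n → ℝ → ℝ} (hw' : IsValueFunction M L x₀ v₀ w') (hγ : ConnectingCurve M x₀ y t γ)
    (ht : 0 < t) (hv : v₀ < u₀) : w' y t < w y t := by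
  have hlam := hL.lam_pos
  set A := (u₀ - v₀) / 2 with hA
  have hA0 : 0 < A := by linarith
  set c := A * Real.exp (-((lam + 1) * t)) with hc
  have hc0 : 0 < c := by positivity
  have hε : 0 < c / (lam + 1) := by positivity
  have hε1 : lam * (c / (lam + 1)) < c := by
    rw [mul_div_assoc', div_lt_iff₀ (by positivity)]; nlinarith
  have hε2 : c / (lam + 1) < c := by
    rw [div_lt_iff₀ (by positivity)]; nlinarith
  obtain ⟨η, hη, hηε⟩ := hw.exists_almost_minimizer hL hγ ht hε
  have key := hw'.exp_le_sub hL hη ht (e := fun r => u₀ + ∫ τ in (0:ℝ)..r, runningCost L w η τ)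
    (k := fun r => w (η r) r) hA0 hε1 (hw.intervalIntegrable hL hη ht.le)
    (fun r _ => by simp) (fun r _ => rfl) (fun r hr => hηε r ⟨hr.1, hr.2.le⟩)
    (by simp only [intervalIntegral.integral_same, add_zero]; linarith)
  have h1 := (abs_le.1 (hηε t ⟨ht, le_rfl⟩)).1
  rw [hη.2.2.2] at h1
  linarith

end IsValueFunction

/-- The Lagrangian of the time-reversed variational principle. -/
def reversedLagrangian (L : Euc n → Euc n → ℝ → ℝ) : Euc n → Euc n → ℝ → ℝ :=
  fun x v u => L x (-v) (-u)

lemma reversedLagrangian_reversedLagrangian : reversedLagrangian (reversedLagrangian L) = L := by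
  funext x v u
  simp [reversedLagrangian]

lemma TameLagrangian.reversed (hL : TameLagrangian M L lam) :
    TameLagrangian M (reversedLagrangian L) lam := by
  obtain ⟨C, hC⟩ := hL.lower
  refine ⟨hL.lam_pos, ?_, fun x v u w => ?_, ⟨C, fun x hx v => ?_⟩, fun K => ?_⟩
  · exact hL.measurable.comp (g := fun z : Euc n × Euc n × ℝ => L z.1 z.2.1 z.2.2)
      (f := fun z : Euc n × Euc n × ℝ => (z.1, -z.2.1, -z.2.2)) (by fun_prop)
  · have := hL.abs_sub_le x (-v) (-u) (-w)
    rwa [neg_sub_neg, abs_sub_comm w u] at this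
  · simpa [reversedLagrangian] using hC x hx (-v)
  · obtain ⟨D, hD⟩ := hL.upper K
    exact ⟨D, fun x hx v hv => by simpa [reversedLagrangian] using hD x hx (-v) (by simpa)⟩

/-- Going forward and then backward does not increase the value. -/
lemma IsValueFunction.neg_le_reversed (hL : TameLagrangian M L lam)
    (hw : IsValueFunction M L x₀ u₀ w) {w' : Euc n → ℝ → ℝ} (ht : 0 < t)
    (hw' : IsValueFunction M (reversedLagrangian L) x (-w x t) w')
    (hγ : ConnectingCurve M x₀ x t γ) : -u₀ ≤ w' x₀ t := by
  by_contra! hlt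
  have hlam := hL.lam_pos
  set A := (-u₀ - w' x₀ t) / 2 with hA
  have hA0 : 0 < A := by linarith
  set c := A * Real.exp (-((lam + 1) * t)) with hc
  have hc0 : 0 < c := by positivity
  have hcA : c ≤ A :=
    mul_le_of_le_one_right hA0.le (Real.exp_le_one_iff.2 (by rw [neg_nonpos]; positivity))
  have hε : 0 < c / (lam + 1) := by positivity
  have hε1 : lam * (c / (lam + 1)) < c := by
    rw [mul_div_assoc', div_lt_iff₀ (by positivity)]; nlinarith
  have hε2 : c / (lam + 1) < c := by
    rw [div_lt_iff₀ (by positivity)]; nlinarith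
  obtain ⟨η, hη, hηε⟩ := hw'.exists_almost_minimizer hL.reversed hγ.reverse ht hε
  have hInt := hw'.intervalIntegrable hL.reversed hη ht.le
  set f := runningCost (reversedLagrangian L) w' η with hf
  set E : ℝ → ℝ := fun r => -w x t + ∫ τ in (0:ℝ)..r, f τ with hE
  have hη' := hη.reverse
  have hsub : ∀ p q, 0 ≤ p → p ≤ q → q ≤ t → IntervalIntegrable f volume p q :=
    fun p q hp hpq hq => hInt.mono_set (by
      rw [uIcc_of_le hpq, uIcc_of_le ht.le]; exact Icc_subset_Icc hp hq)
  have hEt := (abs_le.1 (hηε t ⟨ht, le_rfl⟩)).1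
  rw [hη.2.2.2] at hEt
  have key := hw.exp_le_sub hL hη' ht (e := fun r => -E (t - r))
    (k := fun r => -w' (η (t - r)) (t - r)) (F := fun r => f (t - r)) hA0 hε1 ?_ ?_ ?_ ?_ ?_
  · simp only [hE, sub_self, intervalIntegral.integral_same, add_zero, neg_neg] at key
    linarith
  · simpa using (hInt.comp_sub_left t).symm
  · intro r hr
    have h1 := intervalIntegral.integral_add_adjacent_intervals
      (hsub 0 (t - r) le_rfl (by linarith [hr.2]) (by linarith [hr.1]))
      (hsub (t - r) t (by linarith [hr.2]) (by linarith [hr.1]) le_rfl)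
    rw [intervalIntegral.integral_comp_sub_left]
    simp only [hE, sub_zero]
    linarith
  · intro r _
    simp only [hf, runningCost, reversedLagrangian]
    rw [deriv_comp_const_sub]
  · intro r hr
    have h1 := hηε (t - r) ⟨by linarith [hr.2], by linarith [hr.1]⟩
    rw [← abs_neg] at h1
    convert h1 using 2
    simp only [hE]
    ring
  · simp only [hE, sub_zero]
    linarith

end ValueFunction

section Actions

variable {M : Set (Euc n)} {L : Euc n → Euc n → ℝ → ℝ} {x₀ : Euc n}

lemma IsBackwardAction.isValueFunction {hb : Euc n → ℝ → Euc n → ℝ → ℝ}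
    (hhb : IsBackwardAction M L hb) (hx₀ : x₀ ∈ M) (u₀ : ℝ) :
    IsValueFunction M L x₀ u₀ (hb x₀ u₀) where
  continuousOn := hhb.1.comp (f := fun q : Euc n × ℝ => (x₀, u₀, q.1, q.2)) (by fun_prop)
    fun _ hq => ⟨hx₀, mem_univ _, hq.1, hq.2⟩
  eq_add_sInf y hy t ht := by
    rw [hhb.2 x₀ hx₀ u₀ y hy t ht]
    simp only [actionSet, ConnectingCurve, runningCost, and_assoc]

lemma IsForwardAction.isValueFunction {hf : Euc n → ℝ → Euc n → ℝ → ℝ}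
    (hhf : IsForwardAction M L hf) (hx₀ : x₀ ∈ M) (u₀ : ℝ) :
    IsValueFunction M (reversedLagrangian L) x₀ (-u₀) (fun y t => -hf x₀ u₀ y t) where
  continuousOn := (hhf.1.comp (f := fun q : Euc n × ℝ => (x₀, u₀, q.1, q.2)) (by fun_prop)
    fun _ hq => ⟨hx₀, mem_univ _, hq.1, hq.2⟩).neg
  eq_add_sInf y hy t ht := by
    have hcost : ∀ γ : ℝ → Euc n,
        ∫ τ in (0:ℝ)..t, runningCost (reversedLagrangian L) (fun y t => -hf x₀ u₀ y t)
          (fun τ => γ (t - τ)) τ =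
        ∫ τ in (0:ℝ)..t, L (γ τ) (deriv γ τ) (hf x₀ u₀ (γ τ) (t - τ)) := by
      intro γ
      have h := intervalIntegral.integral_comp_sub_left (a := 0) (b := t)
        (fun τ => L (γ τ) (deriv γ τ) (hf x₀ u₀ (γ τ) (t - τ))) t
      rw [sub_self, sub_zero] at h
      rw [← h]
      refine intervalIntegral.integral_congr fun τ _ => ?_
      simp only [runningCost, reversedLagrangian]
      rw [deriv_comp_const_sub, neg_neg, neg_neg, sub_sub_cancel]
    have hset : {a | ∃ γ : ℝ → Euc n,
        (∃ K : ℝ≥0, LipschitzOnWith K γ (Icc 0 t)) ∧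
        (∀ τ ∈ Icc (0:ℝ) t, γ τ ∈ M) ∧ γ 0 = y ∧ γ t = x₀ ∧
        a = ∫ τ in (0:ℝ)..t, L (γ τ) (deriv γ τ) (hf x₀ u₀ (γ τ) (t - τ))} =
        actionSet M (reversedLagrangian L) (fun y t => -hf x₀ u₀ y t) x₀ y t := by
      ext a
      constructor
      · rintro ⟨γ, hK, hγM, h0, h1, rfl⟩
        exact ⟨_, ConnectingCurve.reverse ⟨hK, hγM, h0, h1⟩, (hcost γ).symm⟩
      · rintro ⟨γ, hγ, rfl⟩
        obtain ⟨hK, hγM, h0, h1⟩ := hγ.reverse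
        refine ⟨_, hK, hγM, h0, h1, ?_⟩
        rw [← hcost]
        simp only [sub_sub_cancel]
    rw [hhf.2 x₀ hx₀ u₀ y hy t ht, hset]
    ring

end Actions

/-- **Proposition 2.4 (Equivalence)**: `h_{x₀,u₀}(x,t) = u ⟺ h^{x,u}(x₀,t) = u₀`. -/
theorem backward_forward_action_equivalence {n : ℕ}
    (H L : Euc n → Euc n → ℝ → ℝ) (lam : ℝ) (hlam : 0 < lam)
    (hC3 : C3 H) (hH1 : PosDefInP H) (hH2 : Superlinear H) (hH3 : LipInU H lam)
    (M : Set (Euc n)) (hM : IsCompact M) (hMconn : IsConnected M)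
    (Φ : ℝ → Euc n × Euc n × ℝ → Euc n × Euc n × ℝ) (hΦ : IsContactFlow H Φ)
    (hLeg : IsLegendre H L)
    (hb : Euc n → ℝ → Euc n → ℝ → ℝ) (hhb : IsBackwardAction M L hb)
    (hf : Euc n → ℝ → Euc n → ℝ → ℝ) (hhf : IsForwardAction M L hf) :
    ∀ x₀ ∈ M, ∀ x ∈ M, ∀ u₀ u : ℝ, ∀ t > (0:ℝ),
      (hb x₀ u₀ x t = u ↔ hf x u x₀ t = u₀) := by
  intro x₀ hx₀ x hx u₀ u t ht
  have hL := tameLagrangian_of_isLegendre hlam hC3 hH1 hH2 hH3 hM hLeg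
  have hB := fun v => hhb.isValueFunction hx₀ v
  have hF := fun v => hhf.isValueFunction hx v
  by_cases hcurve : ∃ γ, ConnectingCurve M x₀ x t γ
  · obtain ⟨γ, hγ⟩ := hcurve
    have hfb : ∀ v, hf x (hb x₀ v x t) x₀ t ≤ v := fun v =>
      neg_le_neg_iff.1 ((hB v).neg_le_reversed hL ht (hF _) hγ)
    have hbf : ∀ v, v ≤ hb x₀ (hf x v x₀ t) x t := by
      intro v
      have h := hB (hf x v x₀ t)
      rw [← neg_neg (hf x v x₀ t), ← reversedLagrangian_reversedLagrangian (L := L)] at h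
      have := (hF v).neg_le_reversed hL.reversed ht h hγ.reverse
      simpa using this
    have hb_mono : ∀ v v', v' < v → hb x₀ v' x t < hb x₀ v x t := fun v v' h =>
      (hB v).lt_of_lt hL (hB v') hγ ht h
    have hf_mono : ∀ v v', v' < v → hf x v' x₀ t < hf x v x₀ t := fun v v' h =>
      neg_lt_neg_iff.1 ((hF v').lt_of_lt hL.reversed (hF v) hγ.reverse ht (neg_lt_neg h))
    constructor
    · rintro rfl
      refine le_antisymm (hfb u₀) (not_lt.1 fun h => ?_)
      exact (hb_mono _ _ h).not_ge (hbf _)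
    · rintro rfl
      refine le_antisymm (not_lt.1 fun h => ?_) (hbf u)
      exact (hf_mono _ _ h).not_ge (hfb _)
  · push Not at hcurve
    have h1 := (hB u₀).eq_of_no_curve hx ht hcurve
    have h2 := (hF u).eq_of_no_curve hx₀ ht fun γ hγ => hcurve _ hγ.reverse
    rw [h1, neg_inj.1 h2, eq_comm]

end
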